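/- Let 0 < α < n and let T be an operator defined pointwise on C_c^∞(ℝ^n). The following are equivalent: (1) there is a constant c such that |Tf(x)| ≤ c I_α(|∇f|)(x) for all x ∈ ℝ^n and all f ∈ C_c^∞(ℝ^n); (2) there is a constant C such that ‖Tf‖_{L^{n/(n−α),∞}(μ)} ≤ C ∫_{ℝ^n} |∇f(y)| (Mμ)(y)^{1−α/n} dy for every locally finite Borel measure μ on ℝ^n and every f ∈ C_c^∞(ℝ^n). -/

import Mathlib

open MeasureTheory Metric Set Filter
open scoped ENNReal NNReal Topology

noncomputable section

abbrev Rn (n : ℕ) := EuclideanSpace ℝ (Fin n)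

/-- An axis-parallel half-open cube in `ℝⁿ`. -/
structure Cube (n : ℕ) where
  corner : Fin n → ℝ
  side : ℝ
  side_pos : 0 < side

/-- The set of points of a cube. -/
def Cube.carrier {n : ℕ} (Q : Cube n) : Set (Rn n) :=
  {x | ∀ i, Q.corner i ≤ x i ∧ x i < Q.corner i + Q.side}

/-- Surface measure on the unit sphere `𝕊^{n-1} ⊆ ℝⁿ`. -/
def sphereMeasure (n : ℕ) : Measure (Rn n) :=
  (MeasureTheory.Measure.hausdorffMeasure ((n : ℝ) - 1)).restrict (sphere (0 : Rn n) 1)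

/-- `f ∈ C_c^∞(ℝⁿ)`. -/
def IsCcSmooth {n : ℕ} (f : Rn n → ℝ) : Prop :=
  ContDiff ℝ (⊤ : ℕ∞) f ∧ HasCompactSupport f

/-- Truncated rough fractional singular integral. -/
def roughOpTrunc (n : ℕ) (α : ℝ) (Ω f : Rn n → ℝ) (x : Rn n) (ε : ℝ) : ℝ :=
  ∫ y in {y : Rn n | ε < ‖y‖}, (Ω (‖y‖⁻¹ • y) / ‖y‖ ^ ((n : ℝ) + 1 - α)) * f (x - y)

/-- The rough fractional singular integral `T_{Ω,α} f`, as a principal value. -/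
def roughOp (n : ℕ) (α : ℝ) (Ω f : Rn n → ℝ) (x : Rn n) : ℝ :=
  limUnder (𝓝[>] (0 : ℝ)) (roughOpTrunc n α Ω f x)

/-- Riesz potential (modulo its normalizing constant) of a nonnegative function. -/
def rieszPot (n : ℕ) (α : ℝ) (g : Rn n → ℝ) (x : Rn n) : ℝ≥0∞ :=
  ∫⁻ y, ENNReal.ofReal (g y) / ENNReal.ofReal (‖x - y‖ ^ ((n : ℝ) - α))

/-- `|∇f|`. -/
def gradNorm {n : ℕ} (f : Rn n → ℝ) (y : Rn n) : ℝ := ‖gradient f y‖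

/-- Weak Lorentz norm `‖Ω‖_{L^{r,∞}(𝕊^{n-1})}`. -/
def weakLorentzSphere (n : ℕ) (r : ℝ) (Ω : Rn n → ℝ) : ℝ≥0∞ :=
  ⨆ (t : ℝ) (_ : 0 < t), ENNReal.ofReal t * sphereMeasure n {y | t < |Ω y|} ^ (1 / r)

/-- Lorentz norm `‖Ω‖_{L^{r,q}(𝕊^{n-1})}`. -/
def lorentzSphere (n : ℕ) (r q : ℝ) (Ω : Rn n → ℝ) : ℝ≥0∞ :=
  (ENNReal.ofReal r *
      ∫⁻ t in Ioi (0 : ℝ),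
        ENNReal.ofReal t ^ q * sphereMeasure n {y | t < |Ω y|} ^ (q / r) / ENNReal.ofReal t) ^ (1 / q)

/-- The Young function `Φ(t) = t log(1+t)^{1/n'}`, `1/n' = (n-1)/n`. -/
def orliczYoung (n : ℕ) (t : ℝ) : ℝ := t * Real.log (1 + t) ^ (((n : ℝ) - 1) / n)

/-- Admissible Orlicz levels for the `L(log L)^{1/n'}` norm w.r.t. normalized surface measure. -/
def orliczSet (n : ℕ) (Ω : Rn n → ℝ) : Set ℝ :=
  {lam | 0 < lam ∧ ⨍ y, orliczYoung n (|Ω y| / lam) ∂sphereMeasure n ≤ 1}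

/-- Orlicz norm `‖Ω‖_{L(log L)^{1/n'}(𝕊^{n-1})}`. -/
def orliczSphereNorm (n : ℕ) (Ω : Rn n → ℝ) : ℝ := sInf (orliczSet n Ω)

/-- A sparse family of cubes. -/
def IsSparse {n : ℕ} (𝒮 : Set (Cube n)) : Prop :=
  ∃ E : Cube n → Set (Rn n),
    (∀ Q ∈ 𝒮, E Q ⊆ Q.carrier ∧ volume Q.carrier ≤ 2 * volume (E Q)) ∧
    𝒮.Pairwise fun Q P => Disjoint (E Q) (E P)

/-- A dyadic grid of cubes. -/
def IsDyadicGrid {n : ℕ} (𝒟 : Set (Cube n)) : Prop :=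
  (∀ Q ∈ 𝒟, ∃ k : ℤ, Q.side = (2 : ℝ) ^ k) ∧
  (∀ (k : ℤ) (x : Rn n), ∃! Q : Cube n, Q ∈ 𝒟 ∧ Q.side = (2 : ℝ) ^ k ∧ x ∈ Q.carrier) ∧
  (∀ Q ∈ 𝒟, ∀ P ∈ 𝒟, Disjoint Q.carrier P.carrier ∨ Q.carrier ⊆ P.carrier ∨ P.carrier ⊆ Q.carrier)

/-- The shifted dyadic grid `𝒟_t = {2^k([0,1)^n + m + (-1)^k t)}`. -/
def shiftedGrid (n : ℕ) (t : Fin n → ℝ) : Set (Cube n) :=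
  {Q | ∃ (k : ℤ) (m : Fin n → ℤ),
      Q.side = (2 : ℝ) ^ k ∧ Q.corner = fun i => (2 : ℝ) ^ k * ((m i : ℝ) + (-1 : ℝ) ^ k * t i)}

/-- `(⨍_Q |g|^s)^{1/s}` as an extended nonnegative real. -/
def avgLs (n : ℕ) (s : ℝ) (Q : Cube n) (g : Rn n → ℝ) : ℝ≥0∞ :=
  ((volume Q.carrier)⁻¹ * ∫⁻ y in Q.carrier, ENNReal.ofReal |g y| ^ s) ^ (1 / s)

/-- The `L^s` sparse (or dyadic) fractional operator `I^𝒮_{α,L^s}`. -/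
def sparseOpLs (n : ℕ) (α s : ℝ) (𝒮 : Set (Cube n)) (g : Rn n → ℝ) (x : Rn n) : ℝ≥0∞ :=
  ∑' Q : 𝒮, Set.indicator (Q : Cube n).carrier
      (fun _ => ENNReal.ofReal ((Q : Cube n).side ^ α) * avgLs n s (Q : Cube n) g) x

/-- The `L^s` fractional maximal operator `M_{α,L^s}`. -/
def maxOpLs (n : ℕ) (α s : ℝ) (g : Rn n → ℝ) (x : Rn n) : ℝ≥0∞ :=
  ⨆ (Q : Cube n) (_ : x ∈ Q.carrier), ENNReal.ofReal (Q.side ^ α) * avgLs n s Q g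

/-- The measure `w dx` associated with a weight `w`. -/
def wMeasure (n : ℕ) (w : Rn n → ℝ) : Measure (Rn n) :=
  volume.withDensity fun x => ENNReal.ofReal (w x)

/-- Muckenhoupt `A_∞` (via the standard fair-proportion characterization). -/
def IsAinfty {n : ℕ} (w : Rn n → ℝ) : Prop :=
  ∃ C > (0 : ℝ), ∃ δ > (0 : ℝ), ∀ Q : Cube n, ∀ S ⊆ Q.carrier, MeasurableSet S →
    wMeasure n w S ≤
      ENNReal.ofReal C * (volume S / volume Q.carrier) ^ δ * wMeasure n w Q.carrier

/-- `‖g‖_{L^p(w)}` for an `ℝ≥0∞`-valued `g`. -/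
def lpNormW (n : ℕ) (p : ℝ) (w : Rn n → ℝ) (g : Rn n → ℝ≥0∞) : ℝ≥0∞ :=
  (∫⁻ x, g x ^ p ∂wMeasure n w) ^ (1 / p)

/-- `‖g‖_{L^{p,∞}(w)}` for an `ℝ≥0∞`-valued `g`. -/
def weakNormW (n : ℕ) (p : ℝ) (w : Rn n → ℝ) (g : Rn n → ℝ≥0∞) : ℝ≥0∞ :=
  ⨆ (lam : ℝ) (_ : 0 < lam),
    ENNReal.ofReal lam * wMeasure n w {x | ENNReal.ofReal lam < g x} ^ (1 / p)

/-- Unweighted `L^p` "norm" of an `ℝ≥0∞`-valued function. -/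
def lqNorm (n : ℕ) (p : ℝ) (g : Rn n → ℝ≥0∞) : ℝ≥0∞ :=
  (∫⁻ x, g x ^ p) ^ (1 / p)

/-- Unweighted weak `L^p` norm of an `ℝ≥0∞`-valued function. -/
def weakNorm (n : ℕ) (p : ℝ) (g : Rn n → ℝ≥0∞) : ℝ≥0∞ :=
  ⨆ (lam : ℝ) (_ : 0 < lam),
    ENNReal.ofReal lam * volume {x | ENNReal.ofReal lam < g x} ^ (1 / p)

/-- Maximal function of a measure over cubes. -/
def measMax (n : ℕ) (μ : Measure (Rn n)) (x : Rn n) : ℝ≥0∞ :=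
  ⨆ (Q : Cube n) (_ : x ∈ Q.carrier), μ Q.carrier / volume Q.carrier

/-- The rough fractional maximal operator `M_{Ω,α}`. -/
def roughMax (n : ℕ) (α : ℝ) (Ω f : Rn n → ℝ) (x : Rn n) : ℝ≥0∞ :=
  ⨆ (t : ℝ) (_ : 0 < t),
    ENNReal.ofReal (t ^ (α - 1)) * ((volume (ball (0 : Rn n) t))⁻¹ *
      ∫⁻ y in ball (0 : Rn n) t, ENNReal.ofReal |Ω (‖y‖⁻¹ • y) * f (x - y)|)

/-- Average of `f` over the ball `B(x,t)`. -/
def ballAvg {n : ℕ} (f : Rn n → ℝ) (x : Rn n) (t : ℝ) : ℝ :=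
  ⨍ y in ball x t, f y

/-- The sharp rough fractional maximal operator `M^#_{Ω,α}`. -/
def roughMaxSharp (n : ℕ) (α : ℝ) (Ω f : Rn n → ℝ) (x : Rn n) : ℝ≥0∞ :=
  ⨆ (t : ℝ) (_ : 0 < t),
    ENNReal.ofReal (t ^ (α - 1)) * ((volume (ball (0 : Rn n) t))⁻¹ *
      ∫⁻ y in ball (0 : Rn n) t,
        ENNReal.ofReal (|Ω (‖y‖⁻¹ • y)| * |f (x - y) - ballAvg f x t|))

/-- The natural rough maximal operator `M^♮_Ω` (with `α = 1`). -/
def roughMaxNatural (n : ℕ) (Ω f : Rn n → ℝ) (x : Rn n) : ℝ≥0∞ :=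
  ⨆ (t : ℝ) (_ : 0 < t),
    ENNReal.ofReal |⨍ y in ball (0 : Rn n) t, Ω (‖y‖⁻¹ • y) * f (x - y)|

/-- The fractional spherical maximal operator `𝒮_β`. -/
def sphMax (n : ℕ) (β : ℝ) (f : Rn n → ℝ) (x : Rn n) : ℝ≥0∞ :=
  ⨆ (r : ℝ) (_ : 0 < r),
    ENNReal.ofReal (r ^ β) *
      ((MeasureTheory.Measure.hausdorffMeasure ((n : ℝ) - 1) (sphere x r))⁻¹ *
        ∫⁻ y in sphere x r, ENNReal.ofReal |f y|
          ∂(MeasureTheory.Measure.hausdorffMeasure ((n : ℝ) - 1)))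


/-- The measure `w^q dx`. -/
def wqMeasure (n : ℕ) (q : ℝ) (w : Rn n → ℝ) : Measure (Rn n) :=
  volume.withDensity fun x => ENNReal.ofReal (w x) ^ q

/-- Weak norm `‖g‖_{L^{q,∞}(w^q)}` for `ℝ≥0∞`-valued `g`. -/
def weakNormWq (n : ℕ) (q : ℝ) (w : Rn n → ℝ) (g : Rn n → ℝ≥0∞) : ℝ≥0∞ :=
  ⨆ (lam : ℝ) (_ : 0 < lam),
    ENNReal.ofReal lam * wqMeasure n q w {x | ENNReal.ofReal lam < g x} ^ (1 / q)

lemma cube_volume {n : ℕ} (Q : Cube n) :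
    volume Q.carrier = ENNReal.ofReal (Q.side ^ n) := by
  have h : Q.carrier = (MeasurableEquiv.toLp 2 (Fin n → ℝ)).symm ⁻¹'
      (Set.univ.pi fun i => Set.Ico (Q.corner i) (Q.corner i + Q.side)) := by
    ext x
    simp [Cube.carrier]
  rw [h, (EuclideanSpace.volume_preserving_symm_measurableEquiv_toLp (Fin n)).measure_preimage_equiv,
    Real.volume_pi_Ico]
  simp [ENNReal.ofReal_pow Q.side_pos.le]

lemma abs_coord_le {n : ℕ} (x : Rn n) (i : Fin n) : |x i| ≤ ‖x‖ := by
  simpa using PiLp.norm_apply_le x i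

lemma closedBall_le {n : ℕ} (μ : Measure (Rn n)) (y : Rn n) {s : ℝ} (hs : 0 < s) :
    μ (closedBall y s) ≤ ENNReal.ofReal ((4 * s) ^ n) * measMax n μ y := by
  let Q : Cube n := ⟨fun i => y i - 2 * s, 4 * s, by positivity⟩
  have hsub : closedBall y s ⊆ Q.carrier := by
    intro x hx i
    have h1 : |(x - y) i| ≤ s := (abs_coord_le _ i).trans (by simpa [dist_eq_norm] using hx)
    have h2 : (x - y) i = x i - y i := rfl
    rw [h2, abs_le] at h1
    constructor <;> simp only [Q] <;> linarith
  have hy : y ∈ Q.carrier := hsub (mem_closedBall_self hs.le)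
  have h3 : μ Q.carrier / volume Q.carrier ≤ measMax n μ y := by
    unfold measMax
    exact le_iSup₂ (f := fun (Q : Cube n) (_ : y ∈ Q.carrier) => μ Q.carrier / volume Q.carrier) Q hy
  have hv : volume Q.carrier = ENNReal.ofReal ((4 * s) ^ n) := cube_volume Q
  rw [hv] at h3
  have hp : 0 < (4 * s) ^ n := by positivity
  rw [ENNReal.div_le_iff (by simpa using hp) ENNReal.ofReal_ne_top] at h3
  rw [mul_comm]
  exact (measure_mono hsub).trans h3

lemma measMax_dirac {n : ℕ} (hn : 0 < n) (x y : Rn n) :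
    measMax n (Measure.dirac x) y ≤ (ENNReal.ofReal ((‖x - y‖ / n) ^ n))⁻¹ := by
  unfold measMax
  refine iSup₂_le fun Q hy => ?_
  by_cases hx : x ∈ Q.carrier
  · rw [Measure.dirac_apply, indicator_of_mem hx, cube_volume]
    simp only [Pi.one_apply, one_div]
    rw [ENNReal.inv_le_inv]
    apply ENNReal.ofReal_le_ofReal
    have hnr : (0:ℝ) < n := by exact_mod_cast hn
    refine pow_le_pow_left₀ (by positivity) ?_ n
    rw [div_le_iff₀ hnr]
    have h1 : ‖x - y‖ ≤ ∑ i, |(x - y) i| := by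
      rw [EuclideanSpace.norm_eq]
      apply Real.sqrt_le_iff.2 ⟨Finset.sum_nonneg fun _ _ => abs_nonneg _, ?_⟩
      simp only [Real.norm_eq_abs]
      exact Finset.sum_sq_le_sq_sum_of_nonneg (fun _ _ => abs_nonneg _)
    refine h1.trans ((Finset.sum_le_card_nsmul Finset.univ _ Q.side ?_).trans ?_)
    · intro i _
      have h2 : (x - y) i = x i - y i := rfl
      rw [h2, abs_le]
      have := hx i
      have := hy i
      constructor <;> linarith
    · simp [mul_comm]
  · rw [Measure.dirac_apply, indicator_of_notMem hx]
    simp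

/-- Kernel estimate. -/
lemma kernel_bound {n : ℕ} (hn : 0 < n) {α : ℝ} (hα0 : 0 < α) (hαn : α < n) :
    ∃ C > (0:ℝ), ∀ (μ : Measure (Rn n)) (E : Set (Rn n)), MeasurableSet E → μ E ≠ 0 → μ E ≠ ∞ →
      ∀ y : Rn n, ∫⁻ x in E, (ENNReal.ofReal (‖x - y‖ ^ ((n : ℝ) - α)))⁻¹ ∂μ ≤
        ENNReal.ofReal C * μ E ^ (α / n) * measMax n μ y ^ (1 - α / n) := by
  have hnr : (0:ℝ) < n := by exact_mod_cast hn
  have hq1 : (2⁻¹ : ℝ) ^ α < 1 := Real.rpow_lt_one (by norm_num) (by norm_num) hα0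
  have hq0 : 0 < (2⁻¹ : ℝ) ^ α := by positivity
  set A : ℝ := 2 ^ ((n:ℝ) - α) * 4 ^ n with hA
  have hApos : 0 < A := by positivity
  set q : ℝ := (2⁻¹ : ℝ) ^ α with hq
  have hq2 : 0 < (1 - q)⁻¹ := inv_pos.2 (by linarith)
  have hs : 0 < 1 - α / n := by rw [sub_pos, div_lt_one hnr]; exact hαn
  refine ⟨1 + A * (1 - q)⁻¹, by positivity, ?_⟩
  intro μ E hE hE0 hEt y
  by_cases hMt : measMax n μ y = ∞
  · rw [hMt, ENNReal.top_rpow_of_pos hs, ENNReal.mul_top]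
    · exact le_top
    · apply mul_ne_zero
      · simp only [ne_eq, ENNReal.ofReal_eq_zero, not_le]; positivity
      · simp [ENNReal.rpow_eq_zero_iff, hE0, hEt]
  have hM0 : measMax n μ y ≠ 0 := by
    intro h0
    apply hE0
    apply measure_mono_null (subset_univ E)
    have hU : (univ : Set (Rn n)) = ⋃ k : ℕ, closedBall y ((k:ℝ) + 1) := by
      symm
      rw [eq_univ_iff_forall]
      intro x
      obtain ⟨k, hk⟩ := exists_nat_ge (dist x y)
      exact mem_iUnion.2 ⟨k, by simp only [mem_closedBall]; linarith⟩
    rw [hU, measure_iUnion_null_iff]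
    intro k
    have := closedBall_le μ y (s := (k:ℝ) + 1) (by positivity)
    rw [h0, mul_zero] at this
    exact le_antisymm this (zero_le)
  set m := (measMax n μ y).toReal with hm
  have hmpos : 0 < m := ENNReal.toReal_pos hM0 hMt
  have hmM : measMax n μ y = ENNReal.ofReal m := (ENNReal.ofReal_toReal hMt).symm
  set e := (μ E).toReal with he
  have hepos : 0 < e := ENNReal.toReal_pos hE0 hEt
  have heE : μ E = ENNReal.ofReal e := (ENNReal.ofReal_toReal hEt).symm
  set r : ℝ := (e / m) ^ (1 / (n:ℝ)) with hr
  have hrpos : 0 < r := by positivity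
  have hsing : μ {y} = 0 := by
    have hle : ∀ s : ℝ, 0 < s → μ {y} ≤ ENNReal.ofReal ((4 * s) ^ n * m) := by
      intro s hs
      rw [ENNReal.ofReal_mul (by positivity), ← hmM]
      exact (measure_mono (singleton_subset_iff.2 (mem_closedBall_self hs.le))).trans
        (closedBall_le μ y hs)
    have ht : Tendsto (fun s : ℝ => ENNReal.ofReal ((4 * s) ^ n * m)) (𝓝[>] 0) (𝓝 0) := by
      have hc : Continuous (fun s : ℝ => ENNReal.ofReal ((4 * s) ^ n * m)) :=
        ENNReal.continuous_ofReal.comp (by fun_prop)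
      have := (hc.tendsto 0).mono_left (nhdsWithin_le_nhds (s := Ioi (0:ℝ)))
      simpa [hn.ne'] using this
    exact le_antisymm (ge_of_tendsto ht (by
      filter_upwards [self_mem_nhdsWithin] with s hs using hle s hs)) (zero_le)
  set K : Rn n → ℝ≥0∞ := fun x => (ENNReal.ofReal (‖x - y‖ ^ ((n : ℝ) - α)))⁻¹ with hK
  have hnα : 0 < (n:ℝ) - α := by linarith
  have hKle : ∀ (S : Set (Rn n)) (ρ : ℝ), 0 < ρ → MeasurableSet S → (∀ x ∈ S, ρ ≤ ‖x - y‖) →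
      ∫⁻ x in S, K x ∂μ ≤ ENNReal.ofReal (ρ ^ (-((n:ℝ) - α))) * μ S := by
    intro S ρ hρ hS h
    rw [← setLIntegral_const]
    refine setLIntegral_mono' hS fun x hx => ?_
    rw [Real.rpow_neg hρ.le, ENNReal.ofReal_inv_of_pos (by positivity), hK]
    simp only
    rw [ENNReal.inv_le_inv]
    exact ENNReal.ofReal_le_ofReal (Real.rpow_le_rpow hρ.le (h x hx) hnα.le)
  let far : Set (Rn n) := E ∩ {x | r ≤ ‖x - y‖}
  let ann : ℕ → Set (Rn n) := fun k =>
    {x | (2⁻¹:ℝ) ^ (k+1) * r ≤ ‖x - y‖} ∩ closedBall y ((2⁻¹:ℝ) ^ k * r)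
  have hcont : Continuous fun x : Rn n => ‖x - y‖ := by fun_prop
  have hfarm : MeasurableSet far := hE.inter (measurableSet_le measurable_const hcont.measurable)
  have hannm : ∀ k, MeasurableSet (ann k) := fun k =>
    (measurableSet_le measurable_const hcont.measurable).inter isClosed_closedBall.measurableSet
  have hcover : E ⊆ far ∪ ({y} ∪ ⋃ k, ann k) := by
    intro x hx
    by_cases h1 : r ≤ ‖x - y‖
    · exact Or.inl ⟨hx, h1⟩
    by_cases h2 : x = y
    · exact Or.inr (Or.inl h2)
    refine Or.inr (Or.inr ?_)
    push Not at h1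
    have hp : 0 < ‖x - y‖ := norm_pos_iff.2 (sub_ne_zero.2 h2)
    obtain ⟨k, hk1, hk2⟩ := exists_nat_pow_near_of_lt_one (x := ‖x - y‖ / r) (y := (2⁻¹:ℝ))
      (by positivity) ((div_le_one hrpos).2 h1.le) (by norm_num) (by norm_num)
    refine mem_iUnion.2 ⟨k, ?_, ?_⟩
    · rw [lt_div_iff₀ hrpos] at hk1
      exact hk1.le
    · rw [div_le_iff₀ hrpos] at hk2
      simpa [dist_eq_norm] using hk2
  have hfar : ∫⁻ x in far, K x ∂μ ≤ ENNReal.ofReal (r ^ (-((n:ℝ) - α)) * e) := by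
    refine (hKle far r hrpos hfarm fun x hx => hx.2).trans ?_
    rw [ENNReal.ofReal_mul (by positivity), ← heE]
    gcongr
    exact inter_subset_left
  have hann : ∀ k, ∫⁻ x in ann k, K x ∂μ ≤ ENNReal.ofReal (A * (r ^ α * m) * q ^ k) := by
    intro k
    refine (hKle (ann k) ((2⁻¹:ℝ) ^ (k+1) * r) (by positivity) (hannm k) fun x hx => hx.1).trans ?_
    have h1 : μ (ann k) ≤ ENNReal.ofReal ((4 * ((2⁻¹:ℝ) ^ k * r)) ^ n * m) := by
      rw [ENNReal.ofReal_mul (by positivity), ← hmM]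
      exact (measure_mono inter_subset_right).trans (closedBall_le μ y (by positivity))
    refine (mul_le_mul_right h1 _).trans ?_
    rw [← ENNReal.ofReal_mul (by positivity)]
    apply ENNReal.ofReal_le_ofReal
    apply le_of_eq
    set t : ℝ := (2⁻¹:ℝ) ^ k with htdef
    have htpos : 0 < t := by positivity
    have e1 : (2⁻¹:ℝ) ^ (k+1) * r = (t * r) / 2 := by rw [pow_succ]; ring
    have e2 : q ^ k = t ^ α := by
      rw [hq, htdef, ← Real.rpow_natCast, ← Real.rpow_natCast, ← Real.rpow_mul (by norm_num),
        ← Real.rpow_mul (by norm_num), mul_comm]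
    have e3 : (t * r) ^ α = (t * r) ^ (-((n:ℝ) - α)) * (t * r) ^ n := by
      rw [← Real.rpow_natCast (t * r) n, ← Real.rpow_add (by positivity)]
      congr 1; ring
    have e4 : ((t * r) / 2) ^ (-((n:ℝ) - α)) = (t * r) ^ (-((n:ℝ) - α)) * 2 ^ ((n:ℝ) - α) := by
      rw [Real.div_rpow (by positivity) (by norm_num), Real.rpow_neg (by norm_num : (0:ℝ) ≤ 2),
        div_inv_eq_mul]
    have e5 : (t * r) ^ α = t ^ α * r ^ α := Real.mul_rpow htpos.le hrpos.le
    rw [e1, e4, e2, hA, mul_pow]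
    calc _ = ((t * r) ^ (-((n:ℝ) - α)) * (t * r) ^ n) * (2 ^ ((n:ℝ) - α) * 4 ^ n * m) := by ring
      _ = _ := by rw [← e3, e5]; ring
  have hsum : ∑' k, ENNReal.ofReal (A * (r ^ α * m) * q ^ k)
      = ENNReal.ofReal (A * (r ^ α * m) * (1 - q)⁻¹) := by
    rw [← ENNReal.ofReal_tsum_of_nonneg (fun k => by positivity)
      ((summable_geometric_of_lt_one hq0.le hq1).mul_left _), tsum_mul_left,
      tsum_geometric_of_lt_one hq0.le hq1]
  have hX1 : r ^ (-((n:ℝ) - α)) * e = e ^ (α / n) * m ^ (1 - α / n) := by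
    rw [hr, ← Real.rpow_mul (by positivity), Real.div_rpow hepos.le hmpos.le]
    have : 1 / (n:ℝ) * (-((n:ℝ) - α)) = α / n - 1 := by field_simp; ring
    rw [this, Real.rpow_sub_one hepos.ne', show 1 - α / n = -(α / n - 1) by ring,
      Real.rpow_neg hmpos.le]
    field_simp
  have hX2 : r ^ α * m = e ^ (α / n) * m ^ (1 - α / n) := by
    rw [hr, ← Real.rpow_mul (by positivity), Real.div_rpow hepos.le hmpos.le,
      Real.rpow_sub hmpos, Real.rpow_one]
    have : 1 / (n:ℝ) * α = α / n := by ring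
    rw [this]
    ring
  calc ∫⁻ x in E, K x ∂μ ≤ ∫⁻ x in far ∪ ({y} ∪ ⋃ k, ann k), K x ∂μ :=
        lintegral_mono_set hcover
    _ ≤ ∫⁻ x in far, K x ∂μ + (∫⁻ x in {y}, K x ∂μ + ∑' k, ∫⁻ x in ann k, K x ∂μ) :=
        (lintegral_union_le _ _ _).trans (add_le_add le_rfl
          ((lintegral_union_le _ _ _).trans (add_le_add le_rfl (lintegral_iUnion_le _ _))))
    _ ≤ ENNReal.ofReal (r ^ (-((n:ℝ) - α)) * e)
          + (0 + ∑' k, ENNReal.ofReal (A * (r ^ α * m) * q ^ k)) := by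
        refine add_le_add hfar (add_le_add ?_ (ENNReal.tsum_le_tsum hann))
        rw [setLIntegral_measure_zero _ _ hsing]
    _ = ENNReal.ofReal ((1 + A * (1 - q)⁻¹) * e ^ (α / n) * m ^ (1 - α / n)) := by
        rw [hsum, zero_add, ← ENNReal.ofReal_add (by positivity) (by positivity), hX1, hX2]
        congr 1; ring
    _ = _ := by
        rw [ENNReal.ofReal_mul (by positivity), ENNReal.ofReal_mul (by positivity), heE, hmM,
          ENNReal.ofReal_rpow_of_pos hepos, ENNReal.ofReal_rpow_of_pos hmpos]

lemma gradNorm_measurable {n : ℕ} {f : Rn n → ℝ} (hf : IsCcSmooth f) :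
    Measurable (gradNorm f) := by
  have h : Continuous (fderiv ℝ f) := hf.1.continuous_fderiv (by simp)
  have : Continuous (gradNorm f) := by
    unfold gradNorm gradient
    exact ((InnerProductSpace.toDual ℝ (Rn n)).symm.continuous.comp h).norm
  exact this.measurable

lemma rieszPot_kernel_measurable {n : ℕ} {α : ℝ} {g : Rn n → ℝ} (hg : Measurable g) :
    Measurable fun p : Rn n × Rn n =>
      ENNReal.ofReal (g p.2) / ENNReal.ofReal (‖p.1 - p.2‖ ^ ((n : ℝ) - α)) := by
  fun_prop

lemma rieszPot_measurable {n : ℕ} {α : ℝ} {g : Rn n → ℝ} (hg : Measurable g) :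
    Measurable (rieszPot n α g) :=
  (rieszPot_kernel_measurable (α := α) hg).lintegral_prod_right'

lemma weak_bound {n : ℕ} (hn : 0 < n) {α : ℝ} (hα0 : 0 < α) (hαn : α < n) :
    ∃ C > (0:ℝ), ∀ (μ : Measure (Rn n)), IsLocallyFiniteMeasure μ → ∀ g : Rn n → ℝ,
      Measurable g → ∀ lam : ℝ≥0∞,
        lam * μ {x | lam ≤ rieszPot n α g x} ^ (1 - α / n) ≤
          ENNReal.ofReal C * ∫⁻ y, ENNReal.ofReal (g y) * measMax n μ y ^ (1 - α / n) := by
  obtain ⟨C, hC, hker⟩ := kernel_bound hn hα0 hαn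
  refine ⟨C, hC, ?_⟩
  intro μ hμ g hg lam
  have hnr : (0:ℝ) < n := by exact_mod_cast hn
  have hs : 0 < 1 - α / n := by rw [sub_pos, div_lt_one hnr]; exact hαn
  set R := ENNReal.ofReal C * ∫⁻ y, ENNReal.ofReal (g y) * measMax n μ y ^ (1 - α / n) with hR
  set E := {x | lam ≤ rieszPot n α g x} with hE
  have hEm : MeasurableSet E := measurableSet_le measurable_const (rieszPot_measurable hg)
  have key : ∀ F : Set (Rn n), MeasurableSet F → F ⊆ E → μ F ≠ ∞ →
      lam * μ F ^ (1 - α / n) ≤ R := by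
    intro F hF hFE hFt
    by_cases hF0 : μ F = 0
    · rw [hF0, ENNReal.zero_rpow_of_pos hs, mul_zero]; exact zero_le
    have hp0 : μ F ^ (α / n) ≠ 0 := by simp [ENNReal.rpow_eq_zero_iff, hF0, hFt]
    have hpt : μ F ^ (α / n) ≠ ∞ := ENNReal.rpow_ne_top_of_nonneg (by positivity) hFt
    have h1 : lam * μ F ≤ ENNReal.ofReal C * μ F ^ (α / n) *
        ∫⁻ y, ENNReal.ofReal (g y) * measMax n μ y ^ (1 - α / n) := by
      calc lam * μ F = ∫⁻ x in F, lam ∂μ := (setLIntegral_const _ _).symm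
        _ ≤ ∫⁻ x in F, rieszPot n α g x ∂μ := setLIntegral_mono' hF fun x hx => hFE hx
        _ = ∫⁻ y, ∫⁻ x in F, ENNReal.ofReal (g y) / ENNReal.ofReal (‖x - y‖ ^ ((n : ℝ) - α)) ∂μ := by
            unfold rieszPot
            exact lintegral_lintegral_swap (rieszPot_kernel_measurable hg).aemeasurable
        _ ≤ ∫⁻ y, (ENNReal.ofReal C * μ F ^ (α / n)) *
              (ENNReal.ofReal (g y) * measMax n μ y ^ (1 - α / n)) := by
            refine lintegral_mono fun y => ?_
            simp only [div_eq_mul_inv]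
            rw [lintegral_const_mul' _ _ ENNReal.ofReal_ne_top]
            refine (mul_le_mul_right (hker μ F hF hF0 hFt y) _).trans (le_of_eq ?_)
            ring
        _ = _ := lintegral_const_mul' _ _ (ENNReal.mul_ne_top ENNReal.ofReal_ne_top hpt)
    rw [← ENNReal.mul_le_mul_iff_right hp0 hpt]
    calc μ F ^ (α / n) * (lam * μ F ^ (1 - α / n))
        = lam * (μ F ^ (α / n) * μ F ^ (1 - α / n)) := by ring
      _ = lam * μ F := by
          rw [← ENNReal.rpow_add _ _ hF0 hFt]; simp
      _ ≤ _ := h1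
      _ = _ := by rw [hR]; ring
  have hmono : Monotone fun k : ℕ => E ∩ closedBall (0 : Rn n) k := by
    intro a b hab
    exact inter_subset_inter_right _ (closedBall_subset_closedBall (by exact_mod_cast hab))
  have hU : (⋃ k : ℕ, E ∩ closedBall (0 : Rn n) k) = E := by
    rw [← inter_iUnion, iUnion_closedBall_nat, inter_univ]
  have ht := tendsto_measure_iUnion_atTop (μ := μ) hmono
  rw [hU] at ht
  have ht2 : Tendsto (fun k : ℕ => μ (E ∩ closedBall (0 : Rn n) k) ^ (1 - α / n)) atTop
      (𝓝 (μ E ^ (1 - α / n))) := (ENNReal.continuous_rpow_const.tendsto _).comp ht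
  have hb : ∀ k : ℕ, lam * μ (E ∩ closedBall (0 : Rn n) k) ^ (1 - α / n) ≤ R := fun k =>
    key _ (hEm.inter isClosed_closedBall.measurableSet) inter_subset_left
      (ne_top_of_le_ne_top (isCompact_closedBall (0 : Rn n) (k:ℝ)).measure_lt_top.ne
        (measure_mono inter_subset_right))
  have hsup : μ E ^ (1 - α / n) ≤ ⨆ k : ℕ, μ (E ∩ closedBall (0 : Rn n) k) ^ (1 - α / n) :=
    le_of_tendsto' ht2 fun k => le_iSup (fun k : ℕ => μ (E ∩ closedBall (0 : Rn n) k) ^ (1 - α / n)) k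
  refine (mul_le_mul_right hsup lam).trans ?_
  rw [ENNReal.mul_iSup]
  exact iSup_le hb

/-- Characterization: `|Tf| ≤ c I_α(|∇f|)` pointwise iff the weak endpoint
Sobolev inequality `‖Tf‖_{L^{n/(n-α),∞}(μ)} ≤ C ∫ |∇f| (Mμ)^{1-α/n}` holds for all locally
finite Borel measures `μ`. -/
theorem statement1 (n : ℕ) (α : ℝ) (hα0 : 0 < α) (hαn : α < n)
    (T : (Rn n → ℝ) → Rn n → ℝ) :
    (∃ c > (0 : ℝ), ∀ f : Rn n → ℝ, IsCcSmooth f → ∀ x : Rn n,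
        ENNReal.ofReal |T f x| ≤ ENNReal.ofReal c * rieszPot n α (gradNorm f) x) ↔
    (∃ C > (0 : ℝ), ∀ μ : Measure (Rn n), IsLocallyFiniteMeasure μ →
        ∀ f : Rn n → ℝ, IsCcSmooth f →
          (⨆ (lam : ℝ) (_ : 0 < lam),
              ENNReal.ofReal lam * μ {x | lam < |T f x|} ^ (((n : ℝ) - α) / n)) ≤
            ENNReal.ofReal C *
              ∫⁻ y, ENNReal.ofReal (gradNorm f y) * measMax n μ y ^ (1 - α / n)) := by
  have hnr : (0:ℝ) < n := hα0.trans hαn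
  have hn : 0 < n := by exact_mod_cast hnr
  have hs : 0 < 1 - α / n := by rw [sub_pos, div_lt_one hnr]; exact hαn
  have hexp : ((n : ℝ) - α) / n = 1 - α / n := by field_simp
  constructor
  · rintro ⟨c, hc, hT⟩
    obtain ⟨C, hC, hw⟩ := weak_bound hn hα0 hαn
    refine ⟨c * C, by positivity, ?_⟩
    intro μ hμ f hf
    refine iSup₂_le fun lam hlam => ?_
    rw [hexp]
    have hc0 : ENNReal.ofReal c ≠ 0 := by simpa using hc
    have hsub : {x | lam < |T f x|} ⊆
        {x | ENNReal.ofReal lam / ENNReal.ofReal c ≤ rieszPot n α (gradNorm f) x} := by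
      intro x hx
      have h1 : ENNReal.ofReal lam ≤ ENNReal.ofReal |T f x| :=
        ENNReal.ofReal_le_ofReal (le_of_lt hx)
      exact ENNReal.div_le_of_le_mul' (h1.trans (hT f hf x))
    have h2 := hw μ hμ (gradNorm f) (gradNorm_measurable hf) (ENNReal.ofReal lam / ENNReal.ofReal c)
    calc ENNReal.ofReal lam * μ {x | lam < |T f x|} ^ (1 - α / n)
        = ENNReal.ofReal c * (ENNReal.ofReal lam / ENNReal.ofReal c
            * μ {x | lam < |T f x|} ^ (1 - α / n)) := by
          rw [← mul_assoc, ENNReal.mul_div_cancel hc0 ENNReal.ofReal_ne_top]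
      _ ≤ ENNReal.ofReal c * (ENNReal.ofReal lam / ENNReal.ofReal c
            * μ {x | ENNReal.ofReal lam / ENNReal.ofReal c ≤ rieszPot n α (gradNorm f) x}
              ^ (1 - α / n)) := by
          gcongr
      _ ≤ _ := by
          rw [ENNReal.ofReal_mul hc.le, mul_assoc]
          gcongr
  · rintro ⟨C, hC, hT⟩
    refine ⟨C * (n:ℝ) ^ ((n:ℝ) - α), by positivity, ?_⟩
    intro f hf x
    have h := hT (Measure.dirac x) inferInstance f hf
    have hptw : ∀ y, ENNReal.ofReal (gradNorm f y) * measMax n (Measure.dirac x) y ^ (1 - α / n) ≤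
        ENNReal.ofReal ((n:ℝ) ^ ((n:ℝ) - α)) *
          (ENNReal.ofReal (gradNorm f y) / ENNReal.ofReal (‖x - y‖ ^ ((n : ℝ) - α))) := by
      intro y
      have h1 : measMax n (Measure.dirac x) y ^ (1 - α / n) ≤
          ENNReal.ofReal ((n:ℝ) ^ ((n:ℝ) - α)) * (ENNReal.ofReal (‖x - y‖ ^ ((n : ℝ) - α)))⁻¹ := by
        refine (ENNReal.rpow_le_rpow (measMax_dirac hn x y) hs.le).trans (le_of_eq ?_)
        rw [ENNReal.inv_rpow, ENNReal.ofReal_rpow_of_nonneg (by positivity) hs.le]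
        have e1 : ((‖x - y‖ / n) ^ n) ^ (1 - α / n) =
            ((n:ℝ) ^ ((n:ℝ) - α))⁻¹ * ‖x - y‖ ^ ((n:ℝ) - α) := by
          rw [← Real.rpow_natCast, ← Real.rpow_mul (by positivity),
            show (n:ℝ) * (1 - α / n) = (n:ℝ) - α by field_simp,
            Real.div_rpow (norm_nonneg _) hnr.le]
          ring
        have hp : 0 < (n:ℝ) ^ ((n:ℝ) - α) := by positivity
        rw [e1, ENNReal.ofReal_mul (by positivity), ENNReal.ofReal_inv_of_pos hp,
          ENNReal.mul_inv (Or.inl (by simp)) (Or.inl (by simpa using hp)), inv_inv]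
      refine (mul_le_mul_right h1 _).trans (le_of_eq ?_)
      rw [div_eq_mul_inv]; ring
    have h3 : ∀ lam : ℝ, 0 < lam → lam < |T f x| → ENNReal.ofReal lam ≤
        ENNReal.ofReal (C * (n:ℝ) ^ ((n:ℝ) - α)) * rieszPot n α (gradNorm f) x := by
      intro lam hl hlx
      have h4 := (le_iSup₂ (f := fun (lam : ℝ) (_ : 0 < lam) => ENNReal.ofReal lam *
        Measure.dirac x {x | lam < |T f x|} ^ (((n : ℝ) - α) / n)) lam hl).trans h
      have hmem : x ∈ {x | lam < |T f x|} := hlx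
      simp only [Measure.dirac_apply, indicator_of_mem hmem, Pi.one_apply, ENNReal.one_rpow,
        mul_one] at h4
      refine h4.trans ?_
      rw [ENNReal.ofReal_mul hC.le, mul_assoc]
      gcongr
      unfold rieszPot
      rw [← lintegral_const_mul' _ _ ENNReal.ofReal_ne_top]
      exact lintegral_mono hptw
    refine le_of_forall_lt fun b hb => ?_
    obtain ⟨b', hb1, hb2⟩ := exists_between hb
    have hb't : b' ≠ ∞ := ne_top_of_lt hb2
    have hb'0 : 0 < b'.toReal := ENNReal.toReal_pos (ne_bot_of_gt hb1) hb't
    refine hb1.trans_le ?_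
    rw [← ENNReal.ofReal_toReal hb't]
    exact h3 _ hb'0 ((ENNReal.lt_ofReal_iff_toReal_lt hb't).1 hb2)

end
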